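/- Let I be the ideal of R = ℚ[x,y,z] generated by x²z, x²y + xz², x³, z⁴, yz³, y³z, y⁴, xy³ + y²z². Then I has height 3, the minimal number of generators of I is 8, and the quotient ring R/I is a finite-dimensional ℚ-vector space. -/

import Mathlib

/-!
Each of `x`, `y`, `z` has a power in `I` (`x³`, `y⁴`, `z⁴`). Two of the three claims follow
from this.
* A prime over `I` contains `x`, `y` and `z`, so it sits on top of the chain
  `0 < (x) < (x, y) < (x, y, z)` and has height at least `3`; the Krull dimension of
  `ℚ[x,y,z]` gives the upper bound (`height_eq_three`).
* The classes of `x`, `y`, `z` in the quotient are nilpotent, hence integral over `ℚ`, so the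
  quotient is a finitely generated integral `ℚ`-algebra, hence finite.

For the number of generators, `leadCoeffs` reads off one coefficient per generator: those of
`x²z, x²y, x³, z⁴, yz³, y³z, y⁴, xy³`. It maps the eight generators to the standard basis of
`ℚ⁸` and kills `(x,y,z) I`: the multiples of the cubic generators by linear forms
involve none of the quartic monomials in the list. So `leadCoeffs (r * f) = r(0) • leadCoeffs f`
for `f ∈ I` (`leadCoeffs_mul`), and any generating set of `I` is sent to a spanning set
of `ℚ⁸`, which has at least eight elements.
-/

open MvPolynomial

/-- The height of an ideal: the infimum of the heights of prime ideals containing it. -/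
noncomputable def idealHeight {R : Type*} [CommRing R] (I : Ideal R) : ℕ∞ :=
  ⨅ p ∈ {p : PrimeSpectrum R | I ≤ p.asIdeal}, Order.height p

/-- The minimal number of generators of an ideal: the smallest cardinality of a
set of elements of the ring generating it as an ideal. -/
noncomputable def minNumGens {R : Type*} [CommRing R] (I : Ideal R) : ℕ :=
  sInf {n : ℕ | ∃ s : Finset R, s.card = n ∧ Ideal.span (s : Set R) = I}

noncomputable abbrev x : MvPolynomial (Fin 3) ℚ := X 0
noncomputable abbrev y : MvPolynomial (Fin 3) ℚ := X 1
noncomputable abbrev z : MvPolynomial (Fin 3) ℚ := X 2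

/-- The exponent of the monomial `x^a y^b z^c`. -/
noncomputable def expo (a b c : ℕ) : Fin 3 →₀ ℕ :=
  Finsupp.single 0 a + Finsupp.single 1 b + Finsupp.single 2 c

lemma expo_le_iff (a b c a' b' c' : ℕ) :
    expo a b c ≤ expo a' b' c' ↔ a ≤ a' ∧ b ≤ b' ∧ c ≤ c' := by
  simp [expo, Finsupp.le_def, Fin.forall_fin_succ]

lemma expo_sub (a b c a' b' c' : ℕ) :
    expo a b c - expo a' b' c' = expo (a - a') (b - b') (c - c') := by
  ext i
  fin_cases i <;> simp [expo]

lemma expo_inj (a b c a' b' c' : ℕ) :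
    expo a b c = expo a' b' c' ↔ a = a' ∧ b = b' ∧ c = c' := by
  simp [expo, Finsupp.ext_iff, Fin.forall_fin_succ]

/-- The monomial `x^a y^b z^c`. -/
noncomputable def mono (a b c : ℕ) : MvPolynomial (Fin 3) ℚ := monomial (expo a b c) 1

lemma mono_eq (a b c : ℕ) : mono a b c = x ^ a * y ^ b * z ^ c := by
  simp [mono, expo, x, y, z, X_pow_eq_monomial, monomial_mul]

lemma coeff_mul_mono (r : MvPolynomial (Fin 3) ℚ) (a b c a' b' c' : ℕ) :
    coeff (expo a b c) (r * mono a' b' c') =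
      if a' ≤ a ∧ b' ≤ b ∧ c' ≤ c then coeff (expo (a - a') (b - b') (c - c')) r else 0 := by
  classical
  simp [mono, coeff_mul_monomial', expo_le_iff, expo_sub]

lemma coeff_mono (a b c a' b' c' : ℕ) :
    coeff (expo a b c) (mono a' b' c') = if a' = a ∧ b' = b ∧ c' = c then 1 else 0 := by
  classical
  simp [mono, coeff_monomial, expo_inj]

/-- The exponents of one monomial from each of the eight generators, in order. -/
noncomputable def leadExpo : Fin 8 → (Fin 3 →₀ ℕ) :=
  ![expo 2 0 1, expo 2 1 0, expo 3 0 0, expo 0 0 4, expo 0 1 3, expo 0 3 1, expo 0 4 0,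
    expo 1 3 0]

/-- The eight generators of the ideal. -/
noncomputable def gen : Fin 8 → MvPolynomial (Fin 3) ℚ :=
  ![mono 2 0 1, mono 2 1 0 + mono 1 0 2, mono 3 0 0, mono 0 0 4, mono 0 1 3, mono 0 3 1,
    mono 0 4 0, mono 1 3 0 + mono 0 2 2]

/-- The coefficients of a polynomial at the exponents `leadExpo`. -/
noncomputable def leadCoeffs : MvPolynomial (Fin 3) ℚ →ₗ[ℚ] (Fin 8 → ℚ) :=
  LinearMap.pi fun i => lcoeff ℚ (leadExpo i)

lemma leadCoeffs_apply (f : MvPolynomial (Fin 3) ℚ) (i : Fin 8) :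
    leadCoeffs f i = coeff (leadExpo i) f := rfl

lemma leadCoeffs_gen (j : Fin 8) : leadCoeffs (gen j) = Pi.single j 1 := by
  ext i
  rw [leadCoeffs_apply]
  fin_cases j <;> fin_cases i <;> simp [leadExpo, gen, coeff_mono]

lemma expo_zero : expo 0 0 0 = 0 := by simp [expo]

lemma leadCoeffs_mul_gen (j : Fin 8) (r : MvPolynomial (Fin 3) ℚ) :
    leadCoeffs (r * gen j) = constantCoeff r • leadCoeffs (gen j) := by
  rw [leadCoeffs_gen]
  ext i
  rw [leadCoeffs_apply]
  fin_cases j <;> fin_cases i <;>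
    simp [leadExpo, gen, mul_add, coeff_mul_mono, expo_zero, constantCoeff_eq]

/-- On the ideal, `leadCoeffs` factors through reduction modulo `(x, y, z)`. -/
lemma leadCoeffs_mul {f : MvPolynomial (Fin 3) ℚ} (hf : f ∈ Ideal.span (Set.range gen)) :
    ∀ r, leadCoeffs (r * f) = constantCoeff r • leadCoeffs f := by
  induction hf using Submodule.span_induction with
  | mem f hf =>
    obtain ⟨j, rfl⟩ := hf
    exact leadCoeffs_mul_gen j
  | zero => simp
  | add f g _ _ hf hg => intro r; simp [mul_add, hf, hg]
  | smul a f _ hf => intro r; rw [smul_eq_mul, ← mul_assoc, hf, hf, map_mul, mul_smul]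

lemma range_gen : Set.range gen =
    {x^2*z, x^2*y + x*z^2, x^3, z^4, y*z^3, y^3*z, y^4, x*y^3 + y^2*z^2} := by
  simp only [gen, Matrix.range_cons, Matrix.range_empty, Set.union_empty, Set.singleton_union,
    mono_eq, pow_zero, pow_one, one_mul, mul_one]

lemma eight_le_card (s : Finset (MvPolynomial (Fin 3) ℚ))
    (hs : Ideal.span (s : Set (MvPolynomial (Fin 3) ℚ)) = Ideal.span (Set.range gen)) :
    8 ≤ s.card := by
  classical
  have hmem : ∀ f ∈ Ideal.span (s : Set (MvPolynomial (Fin 3) ℚ)),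
      leadCoeffs f ∈ Submodule.span ℚ ((s.image leadCoeffs : Finset _) : Set (Fin 8 → ℚ)) := by
    intro f hf
    induction hf using Submodule.span_induction with
    | mem f hf =>
      exact Submodule.subset_span (Finset.mem_coe.2 (Finset.mem_image_of_mem _ hf))
    | zero => simp
    | add f g _ _ hf hg => rw [map_add]; exact add_mem hf hg
    | smul a f hfs hf =>
      rw [smul_eq_mul, leadCoeffs_mul (hs ▸ hfs)]
      exact Submodule.smul_mem _ _ hf
  have htop : Submodule.span ℚ ((s.image leadCoeffs : Finset _) : Set (Fin 8 → ℚ)) = ⊤ := by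
    rw [eq_top_iff, ← (Pi.basisFun ℚ (Fin 8)).span_eq, Submodule.span_le]
    rintro _ ⟨j, rfl⟩
    rw [Pi.basisFun_apply, ← leadCoeffs_gen]
    exact hmem _ (hs ▸ Ideal.subset_span ⟨j, rfl⟩)
  have h := finrank_span_finset_le_card (R := ℚ) (s.image leadCoeffs)
  rw [Set.finrank, htop, finrank_top, Module.finrank_fin_fun] at h
  exact h.trans Finset.card_image_le

lemma minNumGens_eq : minNumGens (Ideal.span (Set.range gen)) = 8 := by
  classical
  have hspan : Ideal.span ((Finset.univ.image gen : Finset _) : Set (MvPolynomial (Fin 3) ℚ)) =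
      Ideal.span (Set.range gen) := by simp
  apply le_antisymm
  · have h : minNumGens (Ideal.span (Set.range gen)) ≤ (Finset.univ.image gen).card :=
      Nat.sInf_le ⟨_, rfl, hspan⟩
    refine h.trans ?_
    simpa using Finset.card_image_le (s := Finset.univ) (f := gen)
  · refine le_csInf ⟨_, _, rfl, hspan⟩ ?_
    rintro n ⟨s, rfl, hs⟩
    exact eight_le_card s hs

/-- The chain `0 < (x) < (x, y) < p`, whose middle terms are realized as kernels of
substitutions, bounds the height of `p` from below. -/
lemma height_eq_three (p : PrimeSpectrum (MvPolynomial (Fin 3) ℚ))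
    (hx : x ∈ p.asIdeal) (hy : y ∈ p.asIdeal) (hz : z ∈ p.asIdeal) : Order.height p = 3 := by
  apply le_antisymm
  · have h := Order.height_le_krullDim p
    have h3 : Order.krullDim (PrimeSpectrum (MvPolynomial (Fin 3) ℚ)) = 3 := by
      change ringKrullDim _ = 3
      simp [MvPolynomial.ringKrullDim_of_isNoetherianRing]
    rw [h3] at h
    exact WithBot.coe_le_coe.1 h
  · let φ₁ : MvPolynomial (Fin 3) ℚ →ₐ[ℚ] MvPolynomial (Fin 3) ℚ := aeval ![0, y, z]
    let φ₂ : MvPolynomial (Fin 3) ℚ →ₐ[ℚ] MvPolynomial (Fin 3) ℚ := aeval ![0, 0, z]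
    let p₀ : PrimeSpectrum (MvPolynomial (Fin 3) ℚ) := ⟨⊥, Ideal.isPrime_bot⟩
    let p₁ : PrimeSpectrum (MvPolynomial (Fin 3) ℚ) := ⟨RingHom.ker φ₁, RingHom.ker_isPrime _⟩
    let p₂ : PrimeSpectrum (MvPolynomial (Fin 3) ℚ) := ⟨RingHom.ker φ₂, RingHom.ker_isPrime _⟩
    have h₀₁ : p₀ < p₁ := by
      rw [← PrimeSpectrum.asIdeal_lt_asIdeal]
      refine bot_lt_iff_ne_bot.2 fun h => ?_
      have hm : x ∈ RingHom.ker φ₁ := by simp [φ₁, x, RingHom.mem_ker]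
      rw [show RingHom.ker φ₁ = ⊥ from h] at hm
      exact X_ne_zero _ (Ideal.mem_bot.1 hm)
    have h₁₂ : p₁ < p₂ := by
      rw [← PrimeSpectrum.asIdeal_lt_asIdeal]
      have hcomp : φ₂.comp φ₁ = φ₂ := by
        ext i : 1
        fin_cases i <;> simp [φ₁, φ₂, y, z]
      refine SetLike.lt_iff_le_and_exists.2 ⟨fun f hf => ?_, y, ?_, ?_⟩
      · change φ₂ f = 0
        rw [← hcomp, AlgHom.comp_apply, show φ₁ f = 0 from hf, map_zero]
      · change φ₂ y = 0
        simp [φ₂, y]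
      · change ¬ φ₁ y = 0
        simp [φ₁, y]
    have h₂₃ : p₂ < p := by
      rw [← PrimeSpectrum.asIdeal_lt_asIdeal]
      have hcomp : (Ideal.Quotient.mkₐ ℚ p.asIdeal).comp φ₂ = Ideal.Quotient.mkₐ ℚ p.asIdeal := by
        have hx' := Ideal.Quotient.eq_zero_iff_mem.2 hx
        have hy' := Ideal.Quotient.eq_zero_iff_mem.2 hy
        ext i : 1
        fin_cases i
        · simpa [φ₂] using hx'.symm
        · simpa [φ₂] using hy'.symm
        · simp [φ₂, z]
      refine SetLike.lt_iff_le_and_exists.2 ⟨fun f hf => ?_, z, hz, ?_⟩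
      · rw [← Ideal.Quotient.eq_zero_iff_mem, ← Ideal.Quotient.mkₐ_eq_mk ℚ, ← hcomp,
          AlgHom.comp_apply, show φ₂ f = 0 from hf, map_zero]
      · change ¬ φ₂ z = 0
        simp [φ₂, z]
    calc (3 : ℕ∞) = 0 + 1 + 1 + 1 := by norm_num
      _ ≤ Order.height p₀ + 1 + 1 + 1 := by gcongr; exact zero_le
      _ ≤ Order.height p₁ + 1 + 1 := by gcongr; exact Order.height_add_one_le h₀₁
      _ ≤ Order.height p₂ + 1 := by gcongr; exact Order.height_add_one_le h₁₂
      _ ≤ Order.height p := Order.height_add_one_le h₂₃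

theorem stmt_16 (I : Ideal (MvPolynomial (Fin 3) ℚ))
    (hI : I = Ideal.span {x^2*z, x^2*y + x*z^2, x^3, z^4, y*z^3, y^3*z, y^4, x*y^3 + y^2*z^2}) :
    idealHeight I = 3 ∧ minNumGens I = 8 ∧
    FiniteDimensional ℚ (MvPolynomial (Fin 3) ℚ ⧸ I) := by
  have hx : x ^ 3 ∈ I := hI ▸ Ideal.subset_span (by simp)
  have hy : y ^ 4 ∈ I := hI ▸ Ideal.subset_span (by simp)
  have hz : z ^ 4 ∈ I := hI ▸ Ideal.subset_span (by simp)
  refine ⟨?_, ?_, ?_⟩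
  · have hp : ∀ p : PrimeSpectrum (MvPolynomial (Fin 3) ℚ), I ≤ p.asIdeal →
        Order.height p = 3 := fun p hp =>
      height_eq_three p (p.2.mem_of_pow_mem _ (hp hx)) (p.2.mem_of_pow_mem _ (hp hy))
        (p.2.mem_of_pow_mem _ (hp hz))
    -- The infimum is over a nonempty family because `I` vanishes at the origin.
    have hle : I ≤ RingHom.ker (constantCoeff : MvPolynomial (Fin 3) ℚ →+* ℚ) := by
      rw [hI, Ideal.span_le]
      rintro f hf
      simp only [Set.mem_insert_iff, Set.mem_singleton_iff] at hf
      change constantCoeff f = 0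
      rcases hf with rfl | rfl | rfl | rfl | rfl | rfl | rfl | rfl <;> simp [x, y, z]
    apply le_antisymm
    · let q : PrimeSpectrum (MvPolynomial (Fin 3) ℚ) := ⟨_, RingHom.ker_isPrime constantCoeff⟩
      exact (iInf₂_le q hle).trans (hp q hle).le
    · exact le_iInf₂ fun p h => (hp p h).ge
  · rw [hI, ← range_gen]
    exact minNumGens_eq
  · have hX : ∀ i, IsIntegral ℚ (Ideal.Quotient.mk I (X i)) := by
      have key : ∀ (f : MvPolynomial (Fin 3) ℚ) (n : ℕ), 0 < n → f ^ n ∈ I →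
          IsIntegral ℚ (Ideal.Quotient.mk I f) := fun f n hn hf =>
        IsIntegral.of_pow hn (by
          rw [← map_pow, Ideal.Quotient.eq_zero_iff_mem.2 hf]; exact isIntegral_zero)
      intro i
      fin_cases i
      · exact key _ 3 (by norm_num) hx
      · exact key _ 4 (by norm_num) hy
      · exact key _ 4 (by norm_num) hz
    have : Algebra.IsIntegral ℚ (MvPolynomial (Fin 3) ℚ ⧸ I) := by
      refine ⟨fun a => ?_⟩
      obtain ⟨f, rfl⟩ := Ideal.Quotient.mk_surjective a
      induction f using MvPolynomial.induction_on with
      | C c => exact isIntegral_algebraMap (R := ℚ) (x := c)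
      | add f g hf hg => rw [map_add]; exact hf.add hg
      | mul_X f i hf => rw [map_mul]; exact hf.mul (hX i)
    exact Algebra.IsIntegral.finite
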